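/- Let d, g, m be natural numbers with d ≥ 1, g ≥ 2d and m ≤ 2g−2. The function z ↦ Z_{g,m}(z)·(2z/(1+4z) − 4z/(√(1+4z)·(√(1+4z)+1))), where Z_{g,m}(z) = (2/(√(1+4z)+1))^{2g−2−m}·(1+4z)^{(g−1)/2} for real z ∈ (−1/4,1/4), is real-analytic at 0, and its d-th Taylor coefficient at 0 equals [2·(g−2)!·(2g−2−m)! / ((g−2d)!·(d−1)!·(2g−3−m+d)!)] · Σ_{k=0}^{d−1} [(−g/2+m/2+1−d)_k · (−g/2+(m+3)/2−d)_k · (1−d)_k]/[((g+1)/2−d)_k · (g/2+1−d)_k · k!] − [2·(g−1)!·(2g−1−m)! / ((g+1−2d)!·(d−1)!·(2g−2−m+d)!)] · Σ_{k=0}^{d−1} [(−g/2+m/2+1−d)_k · (−g/2+(m+3)/2−d)_k · (1−d)_k]/[(g/2+1−d)_k · ((g+3)/2−d)_k · k!], where (x)_k = x(x+1)⋯(x+k−1) denotes the rising factorial. -/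

import Mathlib

/-!
Put `u = √(1 + 4z)`, `t = 2 / (u + 1)` and `s = 2g - 2 - m`. The function to be expanded is
`2z (t^s u^(g-3) - t^(s+1) u^(g-2))`, so it suffices to expand `F_{s,h} = t^s u^(h-1)`. From
`F_{s,h} + z F_{s+2,h} = F_{s+1,h+1}` and `F_{s,h}' = -s F_{s+1,h-1} + 2(h-1) F_{s,h-2}` one gets
`F_{s,h}^(n+1)(0) = -(s+n+2) F_{s+2,h}^(n)(0) + 2h F_{s+1,h-1}^(n)(0)`. Up to the factor
`(-1)^n (s+1)_n`, this is the recurrence satisfied by the iterated commutators of `(d/dx)^2` with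
`x^(-s-1)`, applied to `x^h` at `x = 1`. Their binomial expansion, read backwards and rewritten with
the duplication formula for Pochhammer symbols, is the terminating `₃F₂`.
-/

/-- The generating function `Z_{g,m}(z) = (2/(√(1+4z)+1))^{2g−2−m} · (1+4z)^{(g−1)/2}`. -/
noncomputable def Zgen (g m : ℝ) (z : ℝ) : ℝ :=
  (2 / (Real.sqrt (1 + 4 * z) + 1)) ^ (2 * g - 2 - m) * (1 + 4 * z) ^ ((g - 1) / 2)

open Filter Finset Polynomial
open scoped Nat Topology

section Pochhammer

variable {R : Type*} [CommRing R]

theorem ascPochhammer_succ_eval_left (n : ℕ) (x : R) :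
    (ascPochhammer R (n + 1)).eval x = x * (ascPochhammer R n).eval (x + 1) := by
  simp [ascPochhammer_succ_left, eval_comp]

theorem descPochhammer_succ_eval_left (n : ℕ) (x : R) :
    (descPochhammer R (n + 1)).eval x = x * (descPochhammer R n).eval (x - 1) := by
  simp [descPochhammer_succ_left, eval_comp]

theorem descPochhammer_add_eval (m n : ℕ) (x : R) :
    (descPochhammer R (m + n)).eval x =
      (descPochhammer R m).eval x * (descPochhammer R n).eval (x - m) := by
  simp [← descPochhammer_mul, eval_comp]

theorem ascPochhammer_eval_neg_natCast (n k : ℕ) :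
    (ascPochhammer R k).eval (-(n : R)) = (-1) ^ k * (k ! * n.choose k) := by
  rw [ascPochhammer_eval_neg_eq_descPochhammer, descPochhammer_eval_eq_descFactorial,
    Nat.descFactorial_eq_factorial_mul_choose, Nat.cast_mul]

theorem ascPochhammer_two_mul_eval {K : Type*} [Field K] [NeZero (2 : K)] (k : ℕ) (x : K) :
    (ascPochhammer K (2 * k)).eval x =
      4 ^ k * ((ascPochhammer K k).eval (x / 2) * (ascPochhammer K k).eval ((x + 1) / 2)) := by
  induction k with
  | zero => simp
  | succ k ih =>
    have two_ne_zero : (2 : K) ≠ 0 := NeZero.ne 2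
    rw [Nat.mul_succ, ascPochhammer_succ_eval, ascPochhammer_succ_eval, ih,
      ascPochhammer_succ_eval, ascPochhammer_succ_eval]
    push_cast
    field_simp
    ring

theorem descPochhammer_div_ascPochhammer_natCast {K : Type*} [Field K] [CharZero K] {h n : ℕ}
    (s : ℕ) (hn : 2 * n ≤ h) :
    (descPochhammer K (2 * n)).eval (h : K) / (n ! * (ascPochhammer K n).eval (s + 1 : K)) =
      h ! * s ! / ((h - 2 * n)! * n ! * (s + n)!) := by
  have falling : ((h - 2 * n)! : K) * (descPochhammer K (2 * n)).eval (h : K) = h ! := by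
    rw [descPochhammer_eval_eq_descFactorial]
    exact_mod_cast Nat.factorial_mul_descFactorial hn
  have rising : (s ! : K) * (ascPochhammer K n).eval (s + 1 : K) = (s + n)! :=
    factorial_mul_ascPochhammer K s n
  have factorial_ne_zero (k : ℕ) : (k ! : K) ≠ 0 := Nat.cast_ne_zero.2 k.factorial_ne_zero
  have rising_ne_zero := right_ne_zero_of_mul (rising ▸ factorial_ne_zero (s + n))
  have gap_ne_zero := factorial_ne_zero (h - 2 * n)
  have start_ne_zero := factorial_ne_zero s
  rw [← falling, ← rising]
  field_simp

end Pochhammer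

/-- The sum of the first `N` terms of the hypergeometric series `₃F₂(a, b, c; p, q; 1)`. It is the
whole series when `c = 1 - N`. -/
noncomputable def hypergeometricSum {K : Type*} [Field K] (N : ℕ) (a b c p q : K) : K :=
  ∑ k ∈ range N,
    ((ascPochhammer K k).eval a * (ascPochhammer K k).eval b * (ascPochhammer K k).eval c) /
      ((ascPochhammer K k).eval p * (ascPochhammer K k).eval q * (k ! : K))

/-- The value at `x = 1` of the iterated commutator `[D², [D², …, [D², x ^ c]]]` (with `n`
brackets and `D = d/dx`) applied to `x ^ h`, expanded as `∑ (-1)^i C(n, i) D^(2j) x^c D^(2i)` over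
`i + j = n`. -/
noncomputable def commutatorSum {R : Type*} [CommRing R] (n : ℕ) (h c : R) : R :=
  ∑ ij ∈ antidiagonal n, (n.choose ij.1 : R) *
    ((-1) ^ ij.1 * (descPochhammer R (2 * ij.1)).eval h *
      (descPochhammer R (2 * ij.2)).eval (h + c - 2 * ij.1))

theorem commutatorSum_zero {R : Type*} [CommRing R] (h c : R) : commutatorSum 0 h c = 1 := by
  simp [commutatorSum]

-- This is the identity `[D², x^c] = c (c - 1) x^(c-2) + 2 c x^(c-1) D`.
theorem commutatorSum_succ {R : Type*} [CommRing R] (n : ℕ) (h c : R) :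
    commutatorSum (n + 1) h c =
      c * (c - 1) * commutatorSum n h (c - 2) + 2 * c * h * commutatorSum n (h - 1) (c - 1) := by
  unfold commutatorSum
  rw [sum_antidiagonal_choose_succ_mul fun i j => (-1) ^ i * (descPochhammer R (2 * i)).eval h *
      (descPochhammer R (2 * j)).eval (h + c - 2 * i),
    mul_sum, mul_sum, ← sum_add_distrib, ← sum_add_distrib]
  refine sum_congr rfl fun ⟨i, j⟩ hij => ?_
  dsimp only
  have shift_arg : h - 1 + (c - 1) - 2 * (i : R) = h + (c - 2) - 2 * i := by ring
  have shift_base : h * (descPochhammer R (2 * i)).eval (h - 1) =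
      (descPochhammer R (2 * i)).eval h * (h - 2 * i) := by
    rw [← descPochhammer_succ_eval_left, descPochhammer_succ_eval]
    push_cast
    ring
  have lower_index : (descPochhammer R (2 * (j + 1))).eval (h + c - 2 * i) =
      (h + c - 2 * i) * (h + c - 2 * i - 1) *
        (descPochhammer R (2 * j)).eval (h + (c - 2) - 2 * i) := by
    rw [Nat.mul_succ, descPochhammer_succ_eval_left, descPochhammer_succ_eval_left]
    ring_nf
  have raise_index : (descPochhammer R (2 * (i + 1))).eval h =
      (descPochhammer R (2 * i)).eval h * ((h - 2 * i) * (h - 2 * i - 1)) := by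
    rw [Nat.mul_succ, descPochhammer_succ_eval, descPochhammer_succ_eval]
    push_cast
    ring
  have next_arg : h + c - 2 * ((i + 1 : ℕ) : R) = h + (c - 2) - 2 * i := by
    push_cast
    ring
  rw [← Nat.choose_symm_of_eq_add (mem_antidiagonal.1 hij).symm, lower_index, raise_index,
    next_arg, shift_arg]
  linear_combination -(2 * c * n.choose i * (-1) ^ i *
    (descPochhammer R (2 * j)).eval (h + (c - 2) - 2 * i)) * shift_base

theorem commutatorSum_eq_hypergeometricSum {K : Type*} [Field K] [CharZero K] (n : ℕ) (h c : K)
    (hh : (descPochhammer K (2 * n)).eval h ≠ 0) :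
    commutatorSum n h c = (-1) ^ n * (descPochhammer K (2 * n)).eval h *
      hypergeometricSum (n + 1) ((h + c + 1 - 2 * n) / 2) ((h + c + 2 - 2 * n) / 2) (-n)
        ((h + 1 - 2 * n) / 2) ((h + 2 - 2 * n) / 2) := by
  rw [commutatorSum, ← Nat.sum_antidiagonal_swap, hypergeometricSum, mul_sum,
    Nat.sum_antidiagonal_eq_sum_range_succ_mk]
  refine sum_congr rfl fun k hk => ?_
  obtain ⟨i, rfl⟩ := Nat.exists_eq_add_of_le' (mem_range_succ_iff.1 hk)
  simp only [Prod.swap, Nat.add_sub_cancel]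
  have numerator : (descPochhammer K (2 * k)).eval (h + c - 2 * i) =
      4 ^ k * ((ascPochhammer K k).eval ((h + c + 1 - 2 * (i + k : ℕ)) / 2) *
        (ascPochhammer K k).eval ((h + c + 2 - 2 * (i + k : ℕ)) / 2)) := by
    rw [descPochhammer_eval_eq_ascPochhammer, ascPochhammer_two_mul_eval]
    push_cast
    ring_nf
  have denominator : (descPochhammer K (2 * (i + k))).eval h =
      (descPochhammer K (2 * i)).eval h *
        (4 ^ k * ((ascPochhammer K k).eval ((h + 1 - 2 * (i + k : ℕ)) / 2) *
          (ascPochhammer K k).eval ((h + 2 - 2 * (i + k : ℕ)) / 2))) := by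
    rw [Nat.mul_add, descPochhammer_add_eval, descPochhammer_eval_eq_ascPochhammer (r := h - _),
      ascPochhammer_two_mul_eval]
    push_cast
    ring_nf
  rw [denominator] at hh ⊢
  have denominator_ne_zero := right_ne_zero_of_mul (right_ne_zero_of_mul hh)
  have sign_sq : ((-1 : K) ^ k) ^ 2 = 1 := by rw [← pow_mul, mul_comm, pow_mul]; simp
  have left_ne_zero := left_ne_zero_of_mul denominator_ne_zero
  have right_ne_zero := right_ne_zero_of_mul denominator_ne_zero
  rw [numerator, ascPochhammer_eval_neg_natCast, Nat.choose_symm_add, pow_add]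
  have factorial_ne_zero : (k ! : K) ≠ 0 := Nat.cast_ne_zero.2 k.factorial_ne_zero
  field_simp
  rw [sign_sq]
  ring

/-- The function `t ^ s * u ^ (h - 1)`, where `u = √(1 + 4z)` and `t = 2 / (u + 1)`. It is
`Z_{g,m}` for `h = g` and `s = 2g - 2 - m`; the exponents are taken as parameters because the
recurrences shift them independently. -/
noncomputable def secantGen (s h z : ℝ) : ℝ :=
  (2 / (√(1 + 4 * z) + 1)) ^ s * √(1 + 4 * z) ^ (h - 1)

theorem eventually_one_add_four_mul_pos : ∀ᶠ z : ℝ in 𝓝 0, 0 < 1 + 4 * z :=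
  ContinuousAt.eventually_lt (by fun_prop) (by fun_prop) (by norm_num)

section secantGen

variable (s h : ℝ)

theorem analyticAt_secantGen : AnalyticAt ℝ (secantGen s h) 0 := by
  have sqrt_contDiffAt : ContDiffAt ℝ ⊤ (fun z : ℝ => √(1 + 4 * z)) 0 :=
    ContDiffAt.sqrt (by fun_prop) (by norm_num)
  have base_contDiffAt : ContDiffAt ℝ ⊤ (fun z : ℝ => 2 / (√(1 + 4 * z) + 1)) 0 :=
    contDiffAt_const.div (sqrt_contDiffAt.add contDiffAt_const) (by positivity)
  exact ((base_contDiffAt.rpow_const_of_ne (by norm_num)).mul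
    (sqrt_contDiffAt.rpow_const_of_ne (by norm_num))).analyticAt

theorem contDiffAt_secantGen {k : WithTop ℕ∞} : ContDiffAt ℝ k (secantGen s h) 0 :=
  (analyticAt_secantGen s h).contDiffAt

theorem secantGen_zero : secantGen s h 0 = 1 := by
  norm_num [secantGen]

theorem secantGen_add_one_left (z : ℝ) :
    secantGen (s + 1) h z = 2 / (√(1 + 4 * z) + 1) * secantGen s h z := by
  rw [secantGen, secantGen, Real.rpow_add_one (by positivity)]
  ring

variable {z : ℝ}

theorem secantGen_add_one_right (hz : 0 < 1 + 4 * z) :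
    secantGen s (h + 1) z = √(1 + 4 * z) * secantGen s h z := by
  rw [secantGen, secantGen, add_sub_right_comm, Real.rpow_add_one (Real.sqrt_pos.2 hz).ne']
  ring

-- With `t (u + 1) = 2` and `u² = 1 + 4z` this is `1 + z t² = t u`.
theorem secantGen_add_mul_secantGen (hz : 0 < 1 + 4 * z) :
    secantGen s h z + z * secantGen (s + 2) h z = secantGen (s + 1) (h + 1) z := by
  have sq_sqrt : √(1 + 4 * z) ^ 2 = 1 + 4 * z := Real.sq_sqrt hz.le
  rw [show s + 2 = s + 1 + 1 by ring, secantGen_add_one_right _ _ hz, secantGen_add_one_left,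
    secantGen_add_one_left]
  have add_one_ne_zero : √(1 + 4 * z) + 1 ≠ 0 := by positivity
  generalize √(1 + 4 * z) = u at *
  field_simp
  linear_combination -secantGen s h z * sq_sqrt

theorem hasDerivAt_secantGen (hz : 0 < 1 + 4 * z) :
    HasDerivAt (secantGen s h)
      (-s * secantGen (s + 1) (h - 1) z + 2 * (h - 1) * secantGen s (h - 2) z) z := by
  have sqrt_pos : 0 < √(1 + 4 * z) := Real.sqrt_pos.2 hz
  have base_ne_zero : 2 / (√(1 + 4 * z) + 1) ≠ 0 := by positivity
  have hasDerivAt_sqrt : HasDerivAt (fun z => √(1 + 4 * z)) (2 / √(1 + 4 * z)) z := by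
    refine ((((hasDerivAt_id' z).const_mul 4).const_add 1).sqrt hz.ne').congr_deriv ?_
    ring
  have hasDerivAt_base : HasDerivAt (fun z => 2 / (√(1 + 4 * z) + 1))
      (-(2 / (√(1 + 4 * z) + 1)) ^ 2 / √(1 + 4 * z)) z := by
    refine ((hasDerivAt_const z (2 : ℝ)).div (hasDerivAt_sqrt.add_const 1)
      (by positivity)).congr_deriv ?_
    field_simp
    ring
  refine ((hasDerivAt_base.rpow_const (p := s) (.inl base_ne_zero)).mul
    (hasDerivAt_sqrt.rpow_const (p := h - 1) (.inl sqrt_pos.ne'))).congr_deriv ?_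
  rw [secantGen, secantGen, show h - 2 - 1 = h - 1 - 1 - 1 by ring,
    Real.rpow_sub_one sqrt_pos.ne' (h - 1 - 1), Real.rpow_sub_one sqrt_pos.ne' (h - 1),
    Real.rpow_add_one base_ne_zero, Real.rpow_sub_one base_ne_zero]
  generalize √(1 + 4 * z) = u at *
  field_simp

end secantGen

theorem iteratedDeriv_succ_id_mul {𝕜 : Type*} [NontriviallyNormedField 𝕜] {f : 𝕜 → 𝕜} {n : ℕ}
    (hf : ContDiffAt 𝕜 (n + 1) f 0) :
    iteratedDeriv (n + 1) (fun z => z * f z) 0 = (n + 1) * iteratedDeriv n f 0 := by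
  rw [iteratedDeriv_fun_mul contDiffAt_fun_id hf, sum_eq_single 1]
  · simp [iteratedDeriv_fun_id_zero]
  · intro i _ hi
    simp [iteratedDeriv_fun_id_zero, hi]
  · simp

theorem iteratedDeriv_succ_secantGen (n : ℕ) (s h : ℝ) :
    iteratedDeriv (n + 1) (secantGen s h) 0 =
      -(s + n + 2) * iteratedDeriv n (secantGen (s + 2) h) 0 +
        2 * h * iteratedDeriv n (secantGen (s + 1) (h - 1)) 0 := by
  have from_identity : iteratedDeriv (n + 1) (secantGen (s + 1) (h + 1)) 0 =
      iteratedDeriv (n + 1) (secantGen s h) 0 +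
        (n + 1) * iteratedDeriv n (secantGen (s + 2) h) 0 := by
    rw [← iteratedDeriv_succ_id_mul (contDiffAt_secantGen _ _), ← iteratedDeriv_fun_add
      (contDiffAt_secantGen _ _) (contDiffAt_fun_id.mul (contDiffAt_secantGen _ _))]
    refine EventuallyEq.iteratedDeriv_eq _ ?_
    filter_upwards [eventually_one_add_four_mul_pos] with z hz
    exact (secantGen_add_mul_secantGen s h hz).symm
  have from_derivative : iteratedDeriv (n + 1) (secantGen (s + 1) (h + 1)) 0 =
      -(s + 1) * iteratedDeriv n (secantGen (s + 2) h) 0 +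
        2 * h * iteratedDeriv n (secantGen (s + 1) (h - 1)) 0 := by
    rw [iteratedDeriv_succ', ← iteratedDeriv_const_mul_field, ← iteratedDeriv_const_mul_field,
      ← iteratedDeriv_fun_add (contDiffAt_const.mul (contDiffAt_secantGen _ _))
        (contDiffAt_const.mul (contDiffAt_secantGen _ _))]
    refine EventuallyEq.iteratedDeriv_eq _ ?_
    filter_upwards [eventually_one_add_four_mul_pos] with z hz
    rw [(hasDerivAt_secantGen _ _ hz).deriv]
    ring_nf
  linear_combination from_derivative - from_identity

theorem ascPochhammer_mul_iteratedDeriv_secantGen (n : ℕ) (s h : ℝ) :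
    (ascPochhammer ℝ n).eval (s + 1) * iteratedDeriv n (secantGen s h) 0 =
      (-1) ^ n * commutatorSum n h (-s - 1) := by
  induction n generalizing s h with
  | zero => simp [secantGen_zero, commutatorSum_zero]
  | succ n ih =>
    have left_step := ih (s + 2) h
    have right_step := ih (s + 1) (h - 1)
    have pochhammer_shift : (s + 2) * (ascPochhammer ℝ n).eval (s + 2 + 1) =
        (ascPochhammer ℝ n).eval (s + 1 + 1) * (s + n + 2) := by
      rw [← ascPochhammer_succ_eval_left, ascPochhammer_succ_eval]
      ring_nf
    rw [iteratedDeriv_succ_secantGen, commutatorSum_succ, ascPochhammer_succ_eval_left]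
    rw [show -(s + 2) - 1 = -s - 1 - 2 by ring] at left_step
    rw [show -(s + 1) - 1 = -s - 1 - 1 by ring] at right_step
    linear_combination (s + 1) * iteratedDeriv n (secantGen (s + 2) h) 0 * pochhammer_shift -
      (s + 1) * (s + 2) * left_step + 2 * (s + 1) * h * right_step

theorem iteratedDeriv_secantGen_div_factorial {n : ℕ} {s h : ℝ}
    (hs : (ascPochhammer ℝ n).eval (s + 1) ≠ 0) (hh : (descPochhammer ℝ (2 * n)).eval h ≠ 0) :
    iteratedDeriv n (secantGen s h) 0 / n ! =
      (descPochhammer ℝ (2 * n)).eval h / (n ! * (ascPochhammer ℝ n).eval (s + 1)) *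
        hypergeometricSum (n + 1) ((h - s - 2 * n) / 2) ((h - s + 1 - 2 * n) / 2) (-n)
          ((h + 1 - 2 * n) / 2) ((h + 2 - 2 * n) / 2) := by
  have coeff := ascPochhammer_mul_iteratedDeriv_secantGen n s h
  rw [commutatorSum_eq_hypergeometricSum n h _ hh, ← mul_assoc, ← mul_assoc, ← mul_pow, neg_one_mul,
    neg_neg, one_pow, one_mul, show h + (-s - 1) + 1 - 2 * n = h - s - 2 * n by ring,
    show h + (-s - 1) + 2 - 2 * n = h - s + 1 - 2 * n by ring] at coeff
  field_simp
  linear_combination coeff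

theorem Zgen_eq_secantGen (g m : ℝ) {z : ℝ} (hz : 0 < 1 + 4 * z) :
    Zgen g m z = secantGen (2 * g - 2 - m) g z := by
  rw [Zgen, secantGen, Real.rpow_div_two_eq_sqrt _ hz.le]

/-- The generating function `∑ P_β z^d` of the tautological coefficients of a secant-plane divisor,
as a function of the real parameters `g` and `m`. -/
noncomputable def PbetaGen (g m z : ℝ) : ℝ :=
  Zgen g m z * (2 * z / (1 + 4 * z) - 4 * z / (√(1 + 4 * z) * (√(1 + 4 * z) + 1)))

theorem PbetaGen_eq_mul_secantGen_sub (g m : ℝ) {z : ℝ} (hz : 0 < 1 + 4 * z) :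
    PbetaGen g m z =
      z * (2 * (secantGen (2 * g - 2 - m) (g - 2) z - secantGen (2 * g - 1 - m) (g - 1) z)) := by
  have sqrt_pos : 0 < √(1 + 4 * z) := Real.sqrt_pos.2 hz
  have sq_sqrt : √(1 + 4 * z) ^ 2 = 1 + 4 * z := Real.sq_sqrt hz.le
  have lower_once : secantGen (2 * g - 2 - m) (g - 1) z =
      √(1 + 4 * z) * secantGen (2 * g - 2 - m) (g - 2) z := by
    rw [← secantGen_add_one_right _ _ hz]
    ring_nf
  have lower_twice : secantGen (2 * g - 2 - m) g z =
      √(1 + 4 * z) * secantGen (2 * g - 2 - m) (g - 1) z := by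
    rw [← secantGen_add_one_right _ _ hz, sub_add_cancel]
  rw [PbetaGen, Zgen_eq_secantGen g m hz, show 2 * g - 1 - m = 2 * g - 2 - m + 1 by ring,
    secantGen_add_one_left, lower_twice, lower_once]
  generalize √(1 + 4 * z) = u at *
  rw [← sq_sqrt]
  field_simp
  ring

theorem PbetaGen_eventuallyEq (g m : ℝ) :
    PbetaGen g m =ᶠ[𝓝 0] fun z =>
      z * (2 * (secantGen (2 * g - 2 - m) (g - 2) z - secantGen (2 * g - 1 - m) (g - 1) z)) := by
  filter_upwards [eventually_one_add_four_mul_pos] with z hz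
  exact PbetaGen_eq_mul_secantGen_sub g m hz

theorem analyticAt_PbetaGen (g m : ℝ) : AnalyticAt ℝ (PbetaGen g m) 0 :=
  (analyticAt_id.mul <| analyticAt_const.mul <|
    (analyticAt_secantGen _ _).sub (analyticAt_secantGen _ _)).congr
    (PbetaGen_eventuallyEq g m).symm

theorem iteratedDeriv_succ_PbetaGen_div_factorial (n : ℕ) (g m : ℝ) :
    iteratedDeriv (n + 1) (PbetaGen g m) 0 / (n + 1)! =
      2 * (iteratedDeriv n (secantGen (2 * g - 2 - m) (g - 2)) 0 / n !) -
        2 * (iteratedDeriv n (secantGen (2 * g - 1 - m) (g - 1)) 0 / n !) := by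
  rw [(PbetaGen_eventuallyEq g m).iteratedDeriv_eq, iteratedDeriv_succ_id_mul
      (contDiffAt_const.mul ((contDiffAt_secantGen _ _).sub (contDiffAt_secantGen _ _))),
    iteratedDeriv_const_mul_field,
    iteratedDeriv_fun_sub (contDiffAt_secantGen _ _) (contDiffAt_secantGen _ _),
    Nat.factorial_succ]
  push_cast
  field_simp

theorem taylor_coeff_Pbeta_general (d : ℕ) (g m : ℝ) (hd : 1 ≤ d)
    (hg : (descPochhammer ℝ (2 * d - 1)).eval (g - 1) ≠ 0)
    (hm : (ascPochhammer ℝ d).eval (2 * g - 1 - m) ≠ 0) :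
    AnalyticAt ℝ (PbetaGen g m) 0 ∧
    iteratedDeriv d (PbetaGen g m) 0 / d ! =
      2 * ((descPochhammer ℝ (2 * (d - 1))).eval (g - 2) /
          ((d - 1)! * (ascPochhammer ℝ (d - 1)).eval (2 * g - 2 - m + 1))) *
        hypergeometricSum d (-g / 2 + m / 2 + 1 - d) (-g / 2 + (m + 3) / 2 - d) (1 - d)
          ((g + 1) / 2 - d) (g / 2 + 1 - d) -
      2 * ((descPochhammer ℝ (2 * (d - 1))).eval (g - 1) /
          ((d - 1)! * (ascPochhammer ℝ (d - 1)).eval (2 * g - 1 - m + 1))) *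
        hypergeometricSum d (-g / 2 + m / 2 + 1 - d) (-g / 2 + (m + 3) / 2 - d) (1 - d)
          (g / 2 + 1 - d) ((g + 3) / 2 - d) := by
  refine ⟨analyticAt_PbetaGen g m, ?_⟩
  obtain ⟨n, rfl⟩ := Nat.exists_eq_add_of_le' hd
  rw [show 2 * (n + 1) - 1 = 2 * n + 1 by omega] at hg
  have falling_first : (descPochhammer ℝ (2 * n)).eval (g - 2) ≠ 0 := by
    rw [descPochhammer_succ_eval_left, sub_sub, one_add_one_eq_two] at hg
    exact right_ne_zero_of_mul hg
  have falling_second : (descPochhammer ℝ (2 * n)).eval (g - 1) ≠ 0 := by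
    rw [descPochhammer_succ_eval] at hg
    exact left_ne_zero_of_mul hg
  have rising_first : (ascPochhammer ℝ n).eval (2 * g - 2 - m + 1) ≠ 0 := by
    rw [show 2 * g - 1 - m = 2 * g - 2 - m + 1 by ring, ascPochhammer_succ_eval] at hm
    exact left_ne_zero_of_mul hm
  have rising_second : (ascPochhammer ℝ n).eval (2 * g - 1 - m + 1) ≠ 0 := by
    rw [ascPochhammer_succ_eval_left] at hm
    exact right_ne_zero_of_mul hm
  rw [iteratedDeriv_succ_PbetaGen_div_factorial, Nat.add_sub_cancel,
    iteratedDeriv_secantGen_div_factorial rising_first falling_first,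
    iteratedDeriv_secantGen_div_factorial rising_second falling_second, ← mul_assoc, ← mul_assoc]
  congr! 3 <;> push_cast <;> ring

theorem taylor_coeff_Pbeta (d g m : ℕ) (hd : 1 ≤ d) (hg : 2 * d ≤ g) (hm : m + 2 ≤ 2 * g) :
    AnalyticAt ℝ (fun z => Zgen g m z *
      (2 * z / (1 + 4 * z)
        - 4 * z / (Real.sqrt (1 + 4 * z) * (Real.sqrt (1 + 4 * z) + 1)))) 0 ∧
    iteratedDeriv d (fun z => Zgen g m z *
        (2 * z / (1 + 4 * z)
          - 4 * z / (Real.sqrt (1 + 4 * z) * (Real.sqrt (1 + 4 * z) + 1)))) 0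
        / (d.factorial : ℝ) =
      2 * ((g - 2).factorial : ℝ) * ((2 * g - 2 - m).factorial : ℝ)
          / (((g - 2 * d).factorial : ℝ) * ((d - 1).factorial : ℝ)
              * ((2 * g - 2 - m + d - 1).factorial : ℝ))
        * ∑ k ∈ Finset.range d,
            ((ascPochhammer ℝ k).eval (-(g : ℝ) / 2 + (m : ℝ) / 2 + 1 - d)
                * (ascPochhammer ℝ k).eval (-(g : ℝ) / 2 + ((m : ℝ) + 3) / 2 - d)
                * (ascPochhammer ℝ k).eval (1 - (d : ℝ)))
              / ((ascPochhammer ℝ k).eval (((g : ℝ) + 1) / 2 - d)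
                  * (ascPochhammer ℝ k).eval ((g : ℝ) / 2 + 1 - d)
                  * (k.factorial : ℝ))
      - 2 * ((g - 1).factorial : ℝ) * ((2 * g - 1 - m).factorial : ℝ)
          / (((g + 1 - 2 * d).factorial : ℝ) * ((d - 1).factorial : ℝ)
              * ((2 * g - 2 - m + d).factorial : ℝ))
        * ∑ k ∈ Finset.range d,
            ((ascPochhammer ℝ k).eval (-(g : ℝ) / 2 + (m : ℝ) / 2 + 1 - d)
                * (ascPochhammer ℝ k).eval (-(g : ℝ) / 2 + ((m : ℝ) + 3) / 2 - d)
                * (ascPochhammer ℝ k).eval (1 - (d : ℝ)))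
              / ((ascPochhammer ℝ k).eval ((g : ℝ) / 2 + 1 - d)
                  * (ascPochhammer ℝ k).eval (((g : ℝ) + 3) / 2 - d)
                  * (k.factorial : ℝ)) := by
  have cast_sub_two : ((g - 2 : ℕ) : ℝ) = g - 2 := by push_cast [show 2 ≤ g by omega]; rfl
  have cast_sub_one : ((g - 1 : ℕ) : ℝ) = g - 1 := by push_cast [show 1 ≤ g by omega]; rfl
  have cast_first : ((2 * g - 2 - m : ℕ) : ℝ) = 2 * g - 2 - m := by
    push_cast [show m ≤ 2 * g - 2 by omega, show 2 ≤ 2 * g by omega]; rfl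
  have cast_second : ((2 * g - 1 - m : ℕ) : ℝ) = 2 * g - 1 - m := by
    push_cast [show m ≤ 2 * g - 1 by omega, show 1 ≤ 2 * g by omega]; rfl
  have prefactor_first := descPochhammer_div_ascPochhammer_natCast (K := ℝ) (2 * g - 2 - m)
    (show 2 * (d - 1) ≤ g - 2 by omega)
  have prefactor_second := descPochhammer_div_ascPochhammer_natCast (K := ℝ) (2 * g - 1 - m)
    (show 2 * (d - 1) ≤ g - 1 by omega)
  rw [cast_sub_two, cast_first, show g - 2 - 2 * (d - 1) = g - 2 * d by omega,
    show 2 * g - 2 - m + (d - 1) = 2 * g - 2 - m + d - 1 by omega] at prefactor_first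
  rw [cast_sub_one, cast_second, show g - 1 - 2 * (d - 1) = g + 1 - 2 * d by omega,
    show 2 * g - 1 - m + (d - 1) = 2 * g - 2 - m + d by omega] at prefactor_second
  have falling_ne_zero : (descPochhammer ℝ (2 * d - 1)).eval (g - 1 : ℝ) ≠ 0 := by
    rw [← cast_sub_one, descPochhammer_eval_eq_descFactorial]
    exact_mod_cast (Nat.descFactorial_pos.2 (by omega)).ne'
  have rising_ne_zero : (ascPochhammer ℝ d).eval (2 * g - 1 - m : ℝ) ≠ 0 := by
    rw [← cast_second]
    exact (ascPochhammer_pos d _ (Nat.cast_pos.2 (by omega))).ne'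
  have general := taylor_coeff_Pbeta_general d g m hd falling_ne_zero rising_ne_zero
  rw [prefactor_first, prefactor_second, mul_div_assoc', mul_div_assoc', ← mul_assoc,
    ← mul_assoc] at general
  exact general
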